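/- There is a universal constant C > 0 such that for every d ≥ 1, every n with nd even, every 1 ≤ i ≤ n − 1 and every 0 ≤ j ≤ i d / 2, the expected number Z_{i,j} of vertex subsets of the configuration-model random d-regular multigraph G_{n,d} of size i inducing exactly j edges satisfies E[Z_{i,j}] ≤ C · d · √n · exp{ n · [ (d/2) · H(M(i/n, j/(nd))) − (d − 1) · H(i/n, 1 − i/n) ] }. -/

import Mathlib

/-!
The configuration model; entropy upper bound for `E[Z_{i,j}]`.
-/

open scoped Classical

noncomputable section

def pairings (n d : ℕ) : Finset ((Fin n × Fin d) ≃ (Fin n × Fin d)) :=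
  Finset.univ.filter fun M => (∀ x, M (M x) = x) ∧ ∀ x, M x ≠ x

/-- The number of edges (loops and parallel edges counted) of the sub-multigraph induced on
`S` by the configuration-model multigraph of the pairing `M`. -/
def edgesWithin {n d : ℕ} (M : (Fin n × Fin d) ≃ (Fin n × Fin d)) (S : Finset (Fin n)) : ℕ :=
  (Finset.univ.filter fun h : Fin n × Fin d => h.1 ∈ S ∧ (M h).1 ∈ S).card / 2

/-- `Z_{i,j}`: the number of vertex subsets `S` with `|S| = i` inducing exactly `j` edges. -/
def Zcount (n d i j : ℕ) (M : (Fin n × Fin d) ≃ (Fin n × Fin d)) : ℕ :=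
  (Finset.univ.filter fun S : Finset (Fin n) => S.card = i ∧ edgesWithin M S = j).card

/-- The expectation of `Z_{i,j}` under the uniform distribution on pairings. -/
def EZ (n d i j : ℕ) : ℝ :=
  (∑ M ∈ pairings n d, (Zcount n d i j M : ℝ)) / ((pairings n d).card : ℝ)

/-- `h(x) = -x log x`, with `h(0) = 0` (automatic since `Real.log 0 = 0`). -/
def h (x : ℝ) : ℝ := -(x * Real.log x)

/-- The entropy `H(M(α, β))` of the edge-profile matrix with entries
`2β, α - 2β, α - 2β, 1 - 2α + 2β`. -/
def Hmat (α β : ℝ) : ℝ := h (2 * β) + 2 * h (α - 2 * β) + h (1 - 2 * α + 2 * β)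

section helpers

variable {X : Type} [Fintype X]

/-- Number of ordered half-edges inside `A` whose partner is in `A`. -/
def innerCard (M : X ≃ X) (A : Finset X) : ℕ :=
  (Finset.univ.filter fun x => x ∈ A ∧ M x ∈ A).card

def repSet (M : X ≃ X) : Finset X :=
  Finset.univ.filter fun x => Fintype.equivFin X x < Fintype.equivFin X (M x)

def wt (p q r : ℝ) (b c : Bool) : ℝ :=
  if b then (if c then p else q) else (if c then q else r)

lemma prod_sq_eq (M : X ≃ X) (h1 : ∀ x, M (M x) = x) (h2 : ∀ x, M x ≠ x) {R : Type*}
    [CommMonoid R] (F : X → R) (hF : ∀ x, F (M x) = F x) :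
    (∏ x ∈ repSet M, F x) ^ 2 = ∏ x, F x := by
  rw [← Finset.prod_filter_mul_prod_filter_not Finset.univ
    (fun x => Fintype.equivFin X x < Fintype.equivFin X (M x)), sq]
  congr 1
  refine Finset.prod_bij' (fun x _ => M x) (fun x _ => M x) ?_ ?_ ?_ ?_ ?_
  · intro x hx
    simp only [repSet, Finset.mem_filter, Finset.mem_univ, true_and, not_lt] at hx ⊢
    rw [h1]; exact hx.le
  · intro x hx
    simp only [repSet, Finset.mem_filter, Finset.mem_univ, true_and, not_lt] at hx ⊢
    rw [h1]
    exact lt_of_le_of_ne hx (fun h => h2 x ((Fintype.equivFin X).injective h))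
  · intro x _; exact h1 x
  · intro x _; exact h1 x
  · intro x _; exact (hF x).symm

lemma innerCard_even (M : X ≃ X) (h1 : ∀ x, M (M x) = x) (h2 : ∀ x, M x ≠ x)
    (A : Finset X) : Even (innerCard M A) := by
  have := prod_sq_eq (R := Multiplicative ℕ) M h1 h2
    (fun x => Multiplicative.ofAdd (if x ∈ A ∧ M x ∈ A then 1 else 0)) (by
      intro x; simp only [h1, and_comm])
  rw [← ofAdd_sum, ← ofAdd_sum, ← ofAdd_nsmul] at this
  have h := Multiplicative.ofAdd.injective this
  simp only [Finset.sum_boole, Nat.cast_id, smul_eq_mul] at h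
  rw [innerCard, ← h]
  exact even_two_mul _

lemma wt_sum_le (M : X ≃ X) (h1 : ∀ x, M (M x) = x) (h2 : ∀ x, M x ≠ x)
    (p q r : ℝ) (hp : 0 ≤ p) (hq : 0 ≤ q) (hr : 0 ≤ r) (hs : p + 2 * q + r = 1) :
    ∑ A : Finset X, ∏ x ∈ repSet M, wt p q r (decide (x ∈ A)) (decide (M x ∈ A)) ≤ 1 := by
  have hw : ∀ b c, 0 ≤ wt p q r b c := by
    intro b c; cases b <;> cases c <;> simp [wt, hp, hq, hr]
  let g : Finset X → ({x // x ∈ repSet M} → Bool × Bool) :=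
    fun A x => (decide (x.1 ∈ A), decide (M x.1 ∈ A))
  have hg : Function.Injective g := by
    intro A B hAB
    ext x
    by_cases hx : x ∈ repSet M
    · have := congrFun hAB ⟨x, hx⟩
      simp only [g, Prod.mk.injEq, decide_eq_decide] at this
      exact this.1
    · have hx' : M x ∈ repSet M := by
        simp only [repSet, Finset.mem_filter, Finset.mem_univ, true_and, not_lt] at hx ⊢
        rw [h1]
        exact lt_of_le_of_ne hx (fun h => h2 x ((Fintype.equivFin X).injective h))
      have := congrFun hAB ⟨M x, hx'⟩
      simp only [g, Prod.mk.injEq, decide_eq_decide, h1] at this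
      exact this.2
  calc _ = ∑ A : Finset X, ∏ x, wt p q r (g A x).1 (g A x).2 := by
        refine Finset.sum_congr rfl fun A _ => ?_
        exact (Finset.prod_coe_sort (repSet M)
          (fun x => wt p q r (decide (x ∈ A)) (decide (M x ∈ A)))).symm
    _ = ∑ f ∈ Finset.univ.image g, ∏ x, wt p q r (f x).1 (f x).2 := by
        rw [Finset.sum_image (fun a _ b _ h => hg h)]
    _ ≤ ∑ f : ({x // x ∈ repSet M} → Bool × Bool), ∏ x, wt p q r (f x).1 (f x).2 :=
        Finset.sum_le_sum_of_subset_of_nonneg (Finset.subset_univ _)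
          (fun f _ _ => Finset.prod_nonneg fun x _ => hw _ _)
    _ = ∏ x : {x // x ∈ repSet M}, ∑ b : Bool × Bool, wt p q r b.1 b.2 := by
        rw [Fintype.prod_sum]
    _ = 1 := by
        refine Finset.prod_eq_one fun x _ => ?_
        simp only [Fintype.sum_prod_type, Fintype.sum_bool, wt]
        simp; linarith

lemma cards (M : X ≃ X) (h1 : ∀ x, M (M x) = x) (A : Finset X) :
    (Finset.univ.filter fun x => x ∈ A ∧ M x ∉ A).card + innerCard M A = A.card ∧
    (Finset.univ.filter fun x => x ∉ A ∧ M x ∈ A).card + innerCard M A = A.card ∧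
    (Finset.univ.filter fun x => x ∉ A ∧ M x ∉ A).card + 2 * A.card
      = Fintype.card X + innerCard M A := by
  have e1 : (Finset.univ.filter fun x => x ∈ A ∧ M x ∉ A).card + innerCard M A = A.card := by
    have := Finset.card_filter_add_card_filter_not (s := A) (fun x => M x ∈ A)
    rw [innerCard, ← this, add_comm]
    congr 2 <;> ext x <;> simp
  have e2 : (Finset.univ.filter fun x => x ∉ A ∧ M x ∈ A).card =
      (Finset.univ.filter fun x => x ∈ A ∧ M x ∉ A).card := by
    refine Finset.card_equiv M fun x => ?_
    simp [h1, and_comm]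
  have e3 : (Finset.univ.filter fun x => x ∉ A ∧ M x ∈ A).card +
     (Finset.univ.filter fun x => x ∉ A ∧ M x ∉ A).card + A.card = Fintype.card X := by
    have := Finset.card_filter_add_card_filter_not (s := Aᶜ) (fun x => M x ∈ A)
    rw [← Finset.card_compl_add_card A, ← this]
    congr 3 <;> ext x <;> simp
  omega

lemma prod_wt (M : X ≃ X) (h1 : ∀ x, M (M x) = x) (h2 : ∀ x, M x ≠ x)
    (A : Finset X) (p q r : ℝ) (c k l : ℕ) (hc : innerCard M A = c) (hk : k + c = A.card)
    (hl : l + 2 * A.card = Fintype.card X + c) :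
    (∏ x ∈ repSet M, wt p q r (decide (x ∈ A)) (decide (M x ∈ A))) ^ 2 =
      p ^ c * q ^ (2 * k) * r ^ l := by
  rw [prod_sq_eq M h1 h2]
  · obtain ⟨e1, e2, e3⟩ := cards M h1 A
    simp only [wt, decide_eq_true_eq, Finset.prod_ite, Finset.filter_filter, Finset.prod_const]
    have f1 : (Finset.univ.filter fun x => x ∈ A ∧ M x ∉ A).card = k := by omega
    have f2 : (Finset.univ.filter fun x => x ∉ A ∧ M x ∈ A).card = k := by omega
    have f3 : (Finset.univ.filter fun x => x ∉ A ∧ M x ∉ A).card = l := by omega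
    have f0 : (Finset.univ.filter fun x => x ∈ A ∧ M x ∈ A).card = c := hc
    rw [f0, f1, f2, f3]; ring
  · intro x
    rw [h1]
    by_cases ha : x ∈ A <;> by_cases hb : M x ∈ A <;> simp [wt, ha, hb]

lemma pow_div_eq_exp (N c : ℕ) (hN : 0 < N) :
    ((c : ℝ) / N) ^ c = Real.exp (-(N * h ((c : ℝ) / N))) := by
  have hN' : (N : ℝ) ≠ 0 := by positivity
  rcases Nat.eq_zero_or_pos c with rfl | hc
  · simp [h]
  · have : (0 : ℝ) < (c : ℝ) / N := by positivity
    rw [← Real.exp_log (pow_pos this c), Real.log_pow]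
    congr 1
    unfold h
    field_simp

/-- For a fixed pairing, few sets `A` of size `a` contain exactly `j` edges. -/
lemma count_sets (M : X ≃ X) (h1 : ∀ x, M (M x) = x) (h2 : ∀ x, M x ≠ x)
    (hX : 0 < Fintype.card X) (a j : ℕ) :
    ((Finset.univ.filter fun A : Finset X => A.card = a ∧ innerCard M A / 2 = j).card : ℝ) ≤
      Real.exp ((Fintype.card X : ℝ) / 2 *
        Hmat ((a : ℝ) / Fintype.card X) ((j : ℝ) / Fintype.card X)) := by
  set N := Fintype.card X with hNdef
  set T := Finset.univ.filter fun A : Finset X => A.card = a ∧ innerCard M A / 2 = j with hT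
  rcases T.eq_empty_or_nonempty with hE | ⟨A0, hA0⟩
  · rw [hE]; simp; positivity
  have hN' : (N : ℝ) ≠ 0 := by positivity
  have key : ∀ A ∈ T, innerCard M A = 2 * j ∧ A.card = a := by
    intro A hA
    simp only [hT, Finset.mem_filter, Finset.mem_univ, true_and] at hA
    obtain ⟨m, hm⟩ := innerCard_even M h1 h2 A
    omega
  obtain ⟨g1, g2⟩ := key A0 hA0
  obtain ⟨c1, c2, c3⟩ := cards M h1 A0
  obtain ⟨k, hk⟩ : ∃ k, k + 2 * j = a := ⟨_, by rw [← g1, ← g2]; exact c1⟩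
  obtain ⟨l, hl⟩ : ∃ l, l + 2 * a = N + 2 * j := ⟨_, by rw [← g1, ← g2]; exact c3⟩
  have hkR : (k : ℝ) + 2 * j = a := by exact_mod_cast hk
  have hlR : (l : ℝ) + 2 * a = N + 2 * j := by exact_mod_cast hl
  set p : ℝ := ((2 * j : ℕ) : ℝ) / N with hp
  set q : ℝ := (k : ℝ) / N with hq
  set r : ℝ := (l : ℝ) / N with hr
  have hs : p + 2 * q + r = 1 := by
    rw [hp, hq, hr]; field_simp; push_cast; linarith
  set E := (N : ℝ) / 2 * Hmat ((a : ℝ) / N) ((j : ℝ) / N) with hEdef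
  have hEe : -(N * h p) + (-(N * h q) + -(N * h q)) + -(N * h r) = -E + -E := by
    have e1 : 2 * ((j : ℝ) / N) = p := by rw [hp]; push_cast; ring
    have e2 : (a : ℝ) / N - p = q := by
      rw [hp, hq]; field_simp; push_cast; linarith
    have e3 : 1 - 2 * ((a : ℝ) / N) + p = r := by
      rw [hp, hr]; field_simp; push_cast; linarith
    rw [hEdef, Hmat, e1, e2, e3]; ring
  have hW : ∀ A ∈ T, ∏ x ∈ repSet M, wt p q r (decide (x ∈ A)) (decide (M x ∈ A))
      = Real.exp (-E) := by
    intro A hA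
    obtain ⟨k1, k2⟩ := key A hA
    have hsq := prod_wt M h1 h2 A p q r (2 * j) k l k1 (by omega) (by omega)
    rw [two_mul k, pow_add, hp, hq, hr, pow_div_eq_exp N _ hX, pow_div_eq_exp N _ hX,
      pow_div_eq_exp N _ hX, ← Real.exp_add, ← Real.exp_add, ← Real.exp_add, ← hp, ← hq, ← hr,
      hEe, Real.exp_add, ← sq] at hsq
    refine (pow_left_inj₀ (Finset.prod_nonneg fun x _ => ?_) (Real.exp_pos _).le two_ne_zero).1 hsq
    unfold wt; split_ifs <;> positivity
  have hsum : ∑ A ∈ T, ∏ x ∈ repSet M, wt p q r (decide (x ∈ A)) (decide (M x ∈ A)) ≤ 1 := by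
    refine le_trans (Finset.sum_le_sum_of_subset_of_nonneg (Finset.subset_univ _) ?_)
      (wt_sum_le M h1 h2 p q r (by positivity) (by positivity) (by positivity) hs)
    intro A _ _
    refine Finset.prod_nonneg fun x _ => ?_
    unfold wt; split_ifs <;> positivity
  rw [Finset.sum_congr rfl hW, Finset.sum_const, nsmul_eq_mul, Real.exp_neg,
    mul_inv_le_iff₀ (Real.exp_pos _), one_mul] at hsum
  exact hsum

def pairs (X : Type) [Fintype X] : Finset (X ≃ X) :=
  Finset.univ.filter fun M => (∀ x, M (M x) = x) ∧ ∀ x, M x ≠ x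

lemma symm_count (A B : Finset X) (hAB : A.card = B.card) (j : ℕ) :
    ((pairs X).filter fun M => innerCard M A / 2 = j).card =
    ((pairs X).filter fun M => innerCard M B / 2 = j).card := by
  let σ : Equiv.Perm X := (Finset.equivOfCardEq hAB).extendSubtype
  have hσ : ∀ x, σ x ∈ B ↔ x ∈ A := by
    intro x
    constructor
    · intro hx
      by_contra hn
      exact Equiv.extendSubtype_not_mem (Finset.equivOfCardEq hAB) x hn hx
    · intro hx
      exact Equiv.extendSubtype_mem (Finset.equivOfCardEq hAB) x hx
  have hI : ∀ M : X ≃ X, innerCard M A = innerCard ((σ.symm.trans M).trans σ) B := by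
    intro M
    refine Finset.card_equiv σ fun x => ?_
    simp [hσ]
  refine Finset.card_equiv (Equiv.permCongr σ) fun M => ?_
  have : Equiv.permCongr σ M = ((σ.symm.trans M).trans σ) := rfl
  rw [this]
  simp only [Finset.mem_filter, ← hI, pairs, Finset.mem_univ, true_and]
  refine and_congr_left fun _ => and_congr ?_ ?_
  · constructor
    · intro h x; simp [h]
    · intro h x; simpa using h (σ x)
  · constructor
    · intro h x hx
      apply h (σ.symm x)
      apply σ.injective
      simpa using hx
    · intro h x hx
      apply h (σ x)
      simp [hx]

lemma double_count (A : Finset X) (hX : 0 < Fintype.card X) (j : ℕ) :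
    ((Fintype.card X).choose A.card : ℝ) *
      ((pairs X).filter fun M => innerCard M A / 2 = j).card ≤
    (pairs X).card * Real.exp ((Fintype.card X : ℝ) / 2 *
        Hmat ((A.card : ℝ) / Fintype.card X) ((j : ℝ) / Fintype.card X)) := by
  have e : (Fintype.card X).choose A.card * ((pairs X).filter fun M => innerCard M A / 2 = j).card
      = ∑ M ∈ pairs X,
        (Finset.univ.filter fun B : Finset X => B.card = A.card ∧ innerCard M B / 2 = j).card := by
    calc _ = ∑ B ∈ Finset.powersetCard A.card (Finset.univ : Finset X),
            ((pairs X).filter fun M => innerCard M B / 2 = j).card := by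
          rw [Finset.sum_congr rfl (fun B hB => symm_count B A (Finset.mem_powersetCard.1 hB).2 j),
            Finset.sum_const, Finset.card_powersetCard, Finset.card_univ, smul_eq_mul]
      _ = ∑ M ∈ pairs X, ((Finset.powersetCard A.card (Finset.univ : Finset X)).filter
            fun B => innerCard M B / 2 = j).card := by
          simp only [Finset.card_filter]
          exact Finset.sum_comm
      _ = _ := by
          refine Finset.sum_congr rfl fun M _ => ?_
          congr 1
          ext B
          simp [Finset.mem_powersetCard]
  have e' := congrArg (Nat.cast : ℕ → ℝ) e
  push_cast at e'
  rw [e', ← nsmul_eq_mul, ← Finset.sum_const]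
  refine Finset.sum_le_sum fun M hM => ?_
  simp only [pairs, Finset.mem_filter, Finset.mem_univ, true_and] at hM
  exact count_sets M hM.1 hM.2 hX A.card j

end helpers

lemma pq_exp (N a : ℕ) (ha : a ≤ N) (hN : 0 < N) :
    ((a : ℝ) / N) ^ a * (((N - a : ℕ) : ℝ) / N) ^ (N - a) =
      Real.exp (-(N * (h ((a : ℝ) / N) + h (1 - (a : ℝ) / N)))) := by
  have hN' : (N : ℝ) ≠ 0 := by positivity
  rw [pow_div_eq_exp N _ hN, pow_div_eq_exp N _ hN, ← Real.exp_add]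
  have : ((N - a : ℕ) : ℝ) / N = 1 - (a : ℝ) / N := by
    rw [Nat.cast_sub ha]; field_simp
  rw [this]; congr 1; ring

lemma choose_upper (N a : ℕ) (ha : a ≤ N) (hN : 0 < N) :
    (N.choose a : ℝ) ≤ Real.exp (N * (h ((a : ℝ) / N) + h (1 - (a : ℝ) / N))) := by
  have hN' : (N : ℝ) ≠ 0 := by positivity
  have hb := add_pow ((a : ℝ) / N) (((N - a : ℕ) : ℝ) / N) N
  have h1 : (a : ℝ) / N + ((N - a : ℕ) : ℝ) / N = 1 := by
    rw [Nat.cast_sub ha]; field_simp; ring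
  rw [h1, one_pow] at hb
  have := Finset.single_le_sum (f := fun m => ((a : ℝ) / N) ^ m *
    (((N - a : ℕ) : ℝ) / N) ^ (N - m) * (N.choose m : ℝ)) (s := Finset.range (N + 1))
    (fun m _ => by positivity) (Finset.mem_range.2 (Nat.lt_succ_of_le ha))
  rw [← hb] at this
  simp only [pq_exp N a ha hN] at this
  rw [Real.exp_neg, inv_mul_le_iff₀ (Real.exp_pos _), mul_one] at this
  exact this

lemma factorial_upper (a : ℕ) (ha : 0 < a) :
    (a.factorial : ℝ) ≤ Real.exp 1 * √a * ((a : ℝ) / Real.exp 1) ^ a := by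
  obtain ⟨m, rfl⟩ : ∃ m, a = m + 1 := ⟨a - 1, by omega⟩
  have := Stirling.stirlingSeq'_antitone (Nat.zero_le m)
  simp only [Function.comp_apply, Nat.succ_eq_add_one, zero_add, Stirling.stirlingSeq_one] at this
  rw [Stirling.stirlingSeq, div_le_iff₀ (by positivity), Real.sqrt_mul (by norm_num)] at this
  refine this.trans (le_of_eq ?_)
  field_simp

lemma choose_lower (N a : ℕ) (ha : 0 < a) (haN : a < N) :
    Real.exp (N * (h ((a : ℝ) / N) + h (1 - (a : ℝ) / N))) ≤
      Real.exp 1 ^ 2 * √N * (N.choose a : ℝ) := by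
  have hN : 0 < N := by omega
  obtain ⟨b, rfl⟩ : ∃ b, N = a + b := ⟨N - a, by omega⟩
  have hb : 0 < b := by omega
  have hpq := pq_exp (a + b) a (by omega) hN
  rw [Nat.add_sub_cancel_left] at hpq
  rw [← neg_neg (((a + b : ℕ) : ℝ) * _), Real.exp_neg, ← hpq]
  set N := a + b with hNd
  have hNr : (0 : ℝ) < N := by exact_mod_cast hN
  have har : (0 : ℝ) < a := by exact_mod_cast ha
  have hbr : (0 : ℝ) < b := by exact_mod_cast hb
  have hch : (N.choose a : ℝ) * a.factorial * b.factorial = N.factorial := by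
    have := Nat.choose_mul_factorial_mul_factorial (n := N) (k := a) (by omega)
    rw [show N - a = b by omega] at this
    exact_mod_cast this
  have hlow := Stirling.le_factorial_stirling N
  have hua := factorial_upper a ha
  have hub := factorial_upper b hb
  have hpi : √(N : ℝ) ≤ √(2 * Real.pi * N) := by
    apply Real.sqrt_le_sqrt
    nlinarith [Real.pi_gt_three]
  have hab : √(a : ℝ) * √b ≤ √N * √N := by
    apply mul_le_mul <;> first | positivity | (apply Real.sqrt_le_sqrt; rw [hNd]; push_cast; linarith)
  have hmain : √(N : ℝ) * ((N : ℝ) / Real.exp 1) ^ N ≤ (N.choose a : ℝ) *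
     (Real.exp 1 * √a * ((a : ℝ) / Real.exp 1) ^ a) *
     (Real.exp 1 * √b * ((b : ℝ) / Real.exp 1) ^ b) := by
    calc _ ≤ √(2 * Real.pi * N) * ((N : ℝ) / Real.exp 1) ^ N := by gcongr
      _ ≤ N.factorial := hlow
      _ = (N.choose a : ℝ) * a.factorial * b.factorial := hch.symm
      _ ≤ _ := by gcongr
  have hs : (0 : ℝ) < √N := Real.sqrt_pos.2 hNr
  rw [inv_le_iff_one_le_mul₀ (by positivity)]
  have hE := Real.exp_pos 1
  set e := Real.exp 1
  have h3 : √(N : ℝ) * ((N : ℝ) / e) ^ N ≤ (N.choose a : ℝ) * e ^ 2 * (√N * √N) *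
      (((a : ℝ) / e) ^ a * ((b : ℝ) / e) ^ b) := by
    refine hmain.trans ?_
    calc _ = (N.choose a : ℝ) * e ^ 2 * (√a * √b) * (((a : ℝ) / e) ^ a * ((b : ℝ) / e) ^ b) := by
          ring
      _ ≤ _ := by gcongr
  have h4 : ((a : ℝ) / e) ^ a * ((b : ℝ) / e) ^ b =
      ((a : ℝ) / N) ^ a * ((b : ℝ) / N) ^ b * ((N : ℝ) / e) ^ N := by
    have : ((N : ℝ) / e) ^ N = ((N : ℝ) / e) ^ a * ((N : ℝ) / e) ^ b := by
      rw [← pow_add]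
    rw [this, show ∀ x y z w : ℝ, x * y * (z * w) = (x * z) * (y * w) by intros; ring,
      ← mul_pow, ← mul_pow]
    congr 2 <;> field_simp
  rw [h4] at h3
  have hpos : 0 < √(N : ℝ) * ((N : ℝ) / e) ^ N := by positivity
  refine le_of_mul_le_mul_left ?_ hpos
  rw [mul_one]
  refine h3.trans (le_of_eq ?_)
  ring

lemma EZ_le (n d i j : ℕ) (hd : 1 ≤ d) (hi : i ≤ n) (hn : 0 < n) :
    ((n * d).choose (i * d) : ℝ) * EZ n d i j ≤ (n.choose i : ℝ) *
      Real.exp (((n * d : ℕ) : ℝ) / 2 *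
        Hmat (((i * d : ℕ) : ℝ) / (n * d : ℕ)) ((j : ℝ) / (n * d : ℕ))) := by
  have hX : Fintype.card (Fin n × Fin d) = n * d := by simp
  have hX0 : 0 < Fintype.card (Fin n × Fin d) := by rw [hX]; positivity
  set E := Real.exp (((n * d : ℕ) : ℝ) / 2 *
        Hmat (((i * d : ℕ) : ℝ) / (n * d : ℕ)) ((j : ℝ) / (n * d : ℕ))) with hE
  have hEpos : 0 < E := Real.exp_pos _
  have hdc : ∀ S ∈ Finset.powersetCard i (Finset.univ : Finset (Fin n)),
      ((n * d).choose (i * d) : ℝ) *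
      ((pairings n d).filter fun M => edgesWithin M S = j).card ≤ (pairings n d).card * E := by
    intro S hS
    have hSc : (S ×ˢ (Finset.univ : Finset (Fin d))).card = i * d := by
      rw [Finset.card_product, (Finset.mem_powersetCard.1 hS).2, Finset.card_univ, Fintype.card_fin]
    have := double_count (S ×ˢ (Finset.univ : Finset (Fin d))) hX0 j
    rw [hSc, hX] at this
    have e1 : ∀ M : (Fin n × Fin d) ≃ (Fin n × Fin d),
        innerCard M (S ×ˢ (Finset.univ : Finset (Fin d))) / 2 = edgesWithin M S := by
      intro M
      simp only [innerCard, edgesWithin, Finset.mem_product, Finset.mem_univ, and_true]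
    have hpp : pairs (Fin n × Fin d) = pairings n d := by
      ext M
      simp only [pairs, pairings, Finset.mem_filter, Finset.mem_univ, true_and]
    simp only [e1] at this
    rw [hpp] at this
    exact this
  have hsw : (∑ M ∈ pairings n d, (Zcount n d i j M : ℝ)) =
      ∑ S ∈ Finset.powersetCard i (Finset.univ : Finset (Fin n)),
        (((pairings n d).filter fun M => edgesWithin M S = j).card : ℝ) := by
    have : (∑ M ∈ pairings n d, Zcount n d i j M) =
      ∑ S ∈ Finset.powersetCard i (Finset.univ : Finset (Fin n)),
        ((pairings n d).filter fun M => edgesWithin M S = j).card := by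
      have : ∀ M, Zcount n d i j M = ((Finset.powersetCard i
          (Finset.univ : Finset (Fin n))).filter fun S => edgesWithin M S = j).card := by
        intro M
        unfold Zcount
        congr 1
        ext S
        simp [Finset.mem_powersetCard]
      simp only [this, Finset.card_filter]
      exact Finset.sum_comm
    exact_mod_cast this
  have htot : ((n * d).choose (i * d) : ℝ) * (∑ M ∈ pairings n d, (Zcount n d i j M : ℝ)) ≤
      (n.choose i : ℝ) * ((pairings n d).card * E) := by
    rw [hsw, Finset.mul_sum]
    refine (Finset.sum_le_sum hdc).trans (le_of_eq ?_)
    rw [Finset.sum_const, Finset.card_powersetCard, Finset.card_univ, Fintype.card_fin,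
      nsmul_eq_mul]
  unfold EZ
  rw [← mul_div_assoc]
  apply div_le_of_le_mul₀ (by positivity) (by positivity)
  refine htot.trans (le_of_eq ?_)
  ring

/-- Lemma: there is a universal constant `C` such that for all `d ≥ 1`, `n` with `n*d` even,
`1 ≤ i ≤ n - 1` and `0 ≤ j ≤ i d / 2`,
`E[Z_{i,j}] ≤ C d √n exp{n [(d/2) H(M(i/n, j/(nd))) - (d-1) H(i/n, 1 - i/n)]}`. -/
theorem EZ_entropy_bound :
    ∃ C : ℝ, 0 < C ∧ ∀ (n d i j : ℕ), 1 ≤ d → Even (n * d) →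
      1 ≤ i → i ≤ n - 1 → 2 * j ≤ i * d →
      EZ n d i j ≤ C * d * Real.sqrt n *
        Real.exp (n * ((d / 2) * Hmat ((i : ℝ) / n) ((j : ℝ) / (n * d))
          - ((d : ℝ) - 1) * (h ((i : ℝ) / n) + h (1 - (i : ℝ) / n)))) := by
  refine ⟨Real.exp 1 ^ 2, by positivity, ?_⟩
  intro n d i j hd _ hi hin _
  have hn : 0 < n := by omega
  have hnr : (0 : ℝ) < n := by exact_mod_cast hn
  have hdr : (1 : ℝ) ≤ d := by exact_mod_cast hd
  have hd0 : (d : ℝ) ≠ 0 := by positivity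
  have hid : i * d < n * d := by
    apply Nat.mul_lt_mul_of_pos_right <;> omega
  have hEZ := EZ_le n d i j hd (by omega) hn
  have hup := choose_upper n i (by omega) hn
  have hlo := choose_lower (n * d) (i * d) (by positivity) hid
  have hfr : ((i * d : ℕ) : ℝ) / (n * d : ℕ) = (i : ℝ) / n := by
    push_cast; field_simp
  rw [hfr] at hEZ hlo
  push_cast at hEZ hlo
  set H := h ((i : ℝ) / n) + h (1 - (i : ℝ) / n) with hH
  set B := Hmat ((i : ℝ) / n) ((j : ℝ) / (n * d)) with hB
  have hE0 : 0 ≤ EZ n d i j := by unfold EZ; positivity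
  have hsq : √((n : ℝ) * d) ≤ d * √n := by
    rw [Real.sqrt_mul hnr.le, mul_comm]
    gcongr
    rw [Real.sqrt_le_left (by linarith)]
    nlinarith
  have hexp : Real.exp (n * (d / 2 * B - ((d : ℝ) - 1) * H)) =
      Real.exp (n * H) * Real.exp (n * d / 2 * B) * (Real.exp (n * d * H))⁻¹ := by
    rw [← Real.exp_neg, ← Real.exp_add, ← Real.exp_add]; congr 1; ring
  rw [hexp, ← mul_assoc, ← div_eq_mul_inv, le_div_iff₀ (Real.exp_pos _)]
  calc EZ n d i j * Real.exp (n * d * H)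
      ≤ EZ n d i j * (Real.exp 1 ^ 2 * √((n : ℝ) * d) * ((n * d).choose (i * d) : ℝ)) := by
        gcongr
    _ = Real.exp 1 ^ 2 * √((n : ℝ) * d) * (((n * d).choose (i * d) : ℝ) * EZ n d i j) := by ring
    _ ≤ Real.exp 1 ^ 2 * (d * √n) * (Real.exp (n * H) * Real.exp (n * d / 2 * B)) := by
        refine mul_le_mul (by gcongr) (hEZ.trans (by gcongr)) (by positivity) (by positivity)
    _ = _ := by ring

end
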